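/- The degree-0 case of the main theorem: every GLₙ(k)-invariant polynomial function on Mₙ(k) under conjugation is a polynomial in the trace powers Tr(X), Tr(X²), …, Tr(Xⁿ). -/

import Mathlib

open MvPolynomial

/-- The generic matrix `X = (x_{ij})` whose entries are the coordinate functions on
`Mₙ(k)`. -/
noncomputable def genericMatrix (k : Type*) [Field k] (n : ℕ) :
    Matrix (Fin n) (Fin n) (MvPolynomial (Fin n × Fin n) k) :=
  Matrix.of fun i j => MvPolynomial.X (i, j)

/-- The action of `g ∈ GLₙ(k)` on polynomial functions on `Mₙ(k)` induced by the
conjugation action `ad(g) X = g X g⁻¹`: substitute `x_{ij} ↦ (g X g⁻¹)_{ij}`. -/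
noncomputable def conjSubst (k : Type*) [Field k] (n : ℕ) (g : GL (Fin n) k) :
    MvPolynomial (Fin n × Fin n) k →ₐ[k] MvPolynomial (Fin n × Fin n) k :=
  MvPolynomial.aeval fun ij : Fin n × Fin n =>
    ((((g : Matrix (Fin n) (Fin n) k).map MvPolynomial.C) * genericMatrix k n *
      (((g⁻¹ : GL (Fin n) k) : Matrix (Fin n) (Fin n) k).map MvPolynomial.C) :
        Matrix (Fin n) (Fin n) (MvPolynomial (Fin n × Fin n) k))) ij.1 ij.2


theorem trace_adj_charmatrix {R : Type*} [CommRing R] {n : ℕ} (A : Matrix (Fin n) (Fin n) R) :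
    (A.charmatrix.adjugate).trace = Polynomial.derivative A.charpoly := by
  rw [← Matrix.trace_transpose, Matrix.adjugate_transpose, Matrix.charpoly, Matrix.det_apply',
    Polynomial.derivative_sum, Matrix.trace]
  simp only [Matrix.diag, Matrix.adjugate_def, Matrix.of_apply,
    Matrix.transpose_transpose]
  simp only [Matrix.cramer_apply, Matrix.det_apply']
  rw [Finset.sum_comm]
  refine Finset.sum_congr rfl fun σ _ => ?_
  rw [← Polynomial.C_eq_intCast, Polynomial.derivative_C_mul,
    Polynomial.derivative_prod_finset, Finset.mul_sum]
  refine Finset.sum_congr rfl fun i _ => ?_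
  congr 1
  rw [← Finset.mul_prod_erase _ _ (Finset.mem_univ i), mul_comm]
  congr 1
  · refine Finset.prod_congr rfl fun j hj => ?_
    rw [Matrix.updateCol_ne (Finset.ne_of_mem_erase hj)]
  · by_cases h : σ i = i
    · simp [Matrix.charmatrix_apply, h]
    · simp [Matrix.charmatrix_apply, h, Matrix.diagonal_apply]

theorem adj_coeff_rec {R : Type*} [CommRing R] {n : ℕ} (A : Matrix (Fin n) (Fin n) R) (i : ℕ) :
    (matPolyEquiv A.charmatrix.adjugate).coeff i =
      A * (matPolyEquiv A.charmatrix.adjugate).coeff (i + 1) + A.charpoly.coeff (i + 1) • 1 := by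
  have h : matPolyEquiv (A.charmatrix * A.charmatrix.adjugate) =
      matPolyEquiv (A.charpoly • 1) := by
    rw [Matrix.mul_adjugate]; rfl
  rw [map_mul, Matrix.matPolyEquiv_charmatrix, matPolyEquiv_smul_one] at h
  have h2 := congrArg (fun p => Polynomial.coeff p (i + 1)) h
  simp only [sub_mul, Polynomial.coeff_sub, Polynomial.coeff_X_mul, Polynomial.coeff_C_mul,
    Polynomial.coeff_map] at h2
  rw [sub_eq_iff_eq_add'] at h2
  rw [h2, Algebra.algebraMap_eq_smul_one]

theorem adj_coeff_sum {R : Type*} [CommRing R] {n : ℕ} (A : Matrix (Fin n) (Fin n) R) (i m : ℕ) :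
    (matPolyEquiv A.charmatrix.adjugate).coeff i =
      ∑ j ∈ Finset.range m, A.charpoly.coeff (i + 1 + j) • A ^ j +
      A ^ m * (matPolyEquiv A.charmatrix.adjugate).coeff (i + m) := by
  induction m with
  | zero => simp
  | succ m ih =>
    rw [ih, Finset.sum_range_succ, adj_coeff_rec A (i + m), mul_add, ← mul_assoc, ← pow_succ,
      mul_smul_comm, mul_one, show i + 1 + m = i + m + 1 by ring, show i + (m + 1) = i + m + 1 by ring]
    abel

theorem newton_succ {R : Type*} [CommRing R] {n : ℕ} (A : Matrix (Fin n) (Fin n) R) (i : ℕ) :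
    ∃ m, ((i : R) + 1) * A.charpoly.coeff (i + 1) =
      ∑ j ∈ Finset.range (m + 1), A.charpoly.coeff (i + 1 + j) * (A ^ j).trace := by
  refine ⟨(matPolyEquiv A.charmatrix.adjugate).natDegree, ?_⟩
  have h := adj_coeff_sum A i ((matPolyEquiv A.charmatrix.adjugate).natDegree + 1)
  rw [Polynomial.coeff_eq_zero_of_natDegree_lt (n := i + _) (by omega), mul_zero, add_zero] at h
  have h2 := congrArg Matrix.trace h
  rw [Matrix.trace_sum] at h2
  simp only [Matrix.trace_smul, smul_eq_mul] at h2
  rw [← h2]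
  have h3 := congrArg (fun p => Polynomial.coeff p i) (trace_adj_charmatrix A)
  simp only [Polynomial.coeff_derivative] at h3
  rw [mul_comm, ← h3]
  simp [Matrix.trace, matPolyEquiv_coeff_apply]

theorem newton_all {R : Type*} [CommRing R] {n : ℕ} (A : Matrix (Fin n) (Fin n) R) (i : ℕ) :
    ∃ m, (i : R) * A.charpoly.coeff i =
      ∑ j ∈ Finset.range (m + 1), A.charpoly.coeff (i + j) * (A ^ j).trace := by
  cases i with
  | zero =>
    refine ⟨A.charpoly.natDegree, ?_⟩
    have h := Matrix.aeval_self_charpoly A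
    rw [Polynomial.aeval_eq_sum_range] at h
    have h2 := congrArg Matrix.trace h
    rw [Matrix.trace_sum] at h2
    simp only [Matrix.trace_smul, smul_eq_mul, Matrix.trace_zero] at h2
    simp [h2]
  | succ i =>
    obtain ⟨m, hm⟩ := newton_succ A i
    exact ⟨m, by simpa using hm⟩

theorem coeff_mem {k R : Type*} [Field k] [CharZero k] [CommRing R] [Algebra k R] {n : ℕ}
    (A : Matrix (Fin n) (Fin n) R) (S : Subalgebra k R)
    (hS : ∀ l, 1 ≤ l → l ≤ n → (A ^ l).trace ∈ S) (i : ℕ) : A.charpoly.coeff i ∈ S := by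
  nontriviality R
  have hdeg : A.charpoly.natDegree = n := by simp
  have key : ∀ d i, n - i = d → A.charpoly.coeff i ∈ S := by
    intro d
    induction d using Nat.strong_induction_on with
    | _ d ih =>
      intro i hi
      rcases lt_trichotomy i n with h | h | h
      · obtain ⟨m, hm⟩ := newton_all A i
        rw [Finset.sum_range_succ'] at hm
        simp only [pow_zero, Matrix.trace_one, Fintype.card_fin, add_zero] at hm
        have h1 : ((n - i : ℕ) : k) • A.charpoly.coeff i =
            -∑ j ∈ Finset.range m, A.charpoly.coeff (i + (j + 1)) * (A ^ (j + 1)).trace := by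
          rw [Algebra.smul_def, map_natCast, Nat.cast_sub h.le]
          linear_combination -hm
        have h2 : ((n - i : ℕ) : k) ≠ 0 := by
          rw [Nat.cast_ne_zero]; omega
        rw [← inv_smul_smul₀ h2 (A.charpoly.coeff i), h1]
        refine S.smul_mem (S.neg_mem (S.sum_mem fun j _ => ?_)) _
        by_cases hj : i + (j + 1) ≤ n
        · exact S.mul_mem (ih _ (by omega) _ rfl) (hS _ (by omega) (by omega))
        · rw [Polynomial.coeff_eq_zero_of_natDegree_lt (by omega), zero_mul]
          exact S.zero_mem
      · have := A.charpoly_monic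
        rw [Polynomial.Monic, Polynomial.leadingCoeff, hdeg] at this
        rw [h, this]; exact S.one_mem
      · rw [Polynomial.coeff_eq_zero_of_natDegree_lt (by omega)]
        exact S.zero_mem
  exact key _ i rfl

/-- The companion-type matrix of `A`. -/
noncomputable def compMat {R : Type*} [CommRing R] {n : ℕ} (A : Matrix (Fin n) (Fin n) R) :
    Matrix (Fin n) (Fin n) R :=
  Matrix.of fun i j => if (j : ℕ) + 1 = n then -A.charpoly.coeff i
    else if (i : ℕ) = j + 1 then 1 else 0

/-- The first standard basis vector. -/
def firstVec (R : Type*) [CommRing R] (n : ℕ) : Fin n → R := fun i => if (i : ℕ) = 0 then 1 else 0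

/-- The Krylov matrix `[v, A v, …, A^(n-1) v]`. -/
noncomputable def krylov {R : Type*} [CommRing R] {n : ℕ} (A : Matrix (Fin n) (Fin n) R) :
    Matrix (Fin n) (Fin n) R :=
  Matrix.of fun i j => ((A ^ (j : ℕ)).mulVec (firstVec R n)) i

theorem compMat_map {R S : Type*} [CommRing R] [CommRing S] {n : ℕ}
    (A : Matrix (Fin n) (Fin n) R) (φ : R →+* S) : (compMat A).map φ = compMat (A.map φ) := by
  ext i j
  simp only [compMat, Matrix.map_apply, Matrix.of_apply, Matrix.charpoly_map, Polynomial.coeff_map]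
  split_ifs <;> simp

theorem krylov_map {R S : Type*} [CommRing R] [CommRing S] {n : ℕ}
    (A : Matrix (Fin n) (Fin n) R) (φ : R →+* S) : (krylov A).map φ = krylov (A.map φ) := by
  ext i j
  have h : (A.map φ) ^ (j : ℕ) = (A ^ (j : ℕ)).map φ := by
    rw [← RingHom.mapMatrix_apply, ← RingHom.mapMatrix_apply, map_pow]
  simp only [krylov, Matrix.map_apply, Matrix.of_apply, h, Matrix.mulVec, dotProduct, map_sum,
    map_mul, firstVec]
  refine Finset.sum_congr rfl fun x _ => ?_
  split_ifs <;> simp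

theorem mul_krylov {R : Type*} [CommRing R] {n : ℕ} (A : Matrix (Fin n) (Fin n) R) :
    A * krylov A = krylov A * compMat A := by
  nontriviality R
  ext i j
  have h1 : (A * krylov A) i j = ((A ^ ((j : ℕ) + 1)).mulVec (firstVec R n)) i := by
    rw [pow_succ', ← Matrix.mulVec_mulVec]; rfl
  rw [h1, Matrix.mul_apply]
  simp only [krylov, compMat, Matrix.of_apply]
  by_cases hj : (j : ℕ) + 1 = n
  · simp only [hj, if_true]
    have h := Matrix.aeval_self_charpoly A
    have hdeg : A.charpoly.natDegree = n := by simp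
    have hc : A.charpoly.coeff n = 1 := by
      have := A.charpoly_monic
      rwa [Polynomial.Monic, Polynomial.leadingCoeff, hdeg] at this
    rw [Polynomial.aeval_eq_sum_range, hdeg, Finset.sum_range_succ, hc, one_smul] at h
    rw [eq_neg_of_add_eq_zero_right h, Matrix.neg_mulVec, Matrix.sum_mulVec, Pi.neg_apply,
      Finset.sum_apply, Finset.sum_range, ← Finset.sum_neg_distrib]
    refine Finset.sum_congr rfl fun x _ => ?_
    rw [Matrix.smul_mulVec, Pi.smul_apply, smul_eq_mul]
    ring
  · simp only [hj, if_false]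
    rw [Finset.sum_eq_single ⟨(j : ℕ) + 1, by omega⟩]
    · simp
    · intro b _ hb
      rw [if_neg, mul_zero]
      intro h; exact hb (Fin.ext h)
    · simp

theorem krylov_shift (R : Type*) [CommRing R] (n : ℕ) :
    krylov (Matrix.of fun i j : Fin n => if (i : ℕ) = j + 1 then (1 : R) else 0) = 1 := by
  have key : ∀ m : ℕ,
      ((Matrix.of fun i j : Fin n => if (i : ℕ) = j + 1 then (1 : R) else 0) ^ m).mulVec
      (firstVec R n) = fun i : Fin n => if (i : ℕ) = m then 1 else 0 := by
    intro m
    induction m with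
    | zero => ext i; simp [firstVec]
    | succ m ih =>
      rw [pow_succ', ← Matrix.mulVec_mulVec, ih]
      ext i
      simp only [Matrix.mulVec, dotProduct, Matrix.of_apply, mul_ite, mul_one, mul_zero]
      by_cases h : (i : ℕ) = m + 1
      · rw [Finset.sum_eq_single ⟨m, by omega⟩]
        · simp
        · intro b _ hb
          rw [if_neg]
          intro h'; exact hb (Fin.ext h')
        · simp
      · rw [if_neg h]
        refine Finset.sum_eq_zero fun x _ => ?_
        split_ifs <;> first | rfl | omega
  ext i j
  simp only [krylov, Matrix.of_apply, key, Matrix.one_apply, Fin.ext_iff]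

theorem aeval_mem_of_mem {k σ R : Type*} [Field k] [CommRing R] [Algebra k R]
    (S : Subalgebra k R) (v : σ → R) (hv : ∀ s, v s ∈ S) (f : MvPolynomial σ k) :
    MvPolynomial.aeval v f ∈ S := by
  induction f using MvPolynomial.induction_on with
  | C a => rw [MvPolynomial.aeval_C]; exact S.algebraMap_mem a
  | add p q hp hq => rw [map_add]; exact S.add_mem hp hq
  | mul_X p i hp => rw [map_mul, MvPolynomial.aeval_X]; exact S.mul_mem hp (hv i)

theorem genericMatrix_map_eval {k : Type*} [Field k] {n : ℕ} (x : Fin n × Fin n → k) :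
    (genericMatrix k n).map (MvPolynomial.eval x) = Matrix.of fun i j => x (i, j) := by
  ext i j; simp [genericMatrix]

theorem eval_aeval_matrix {k : Type*} [Field k] {n : ℕ} (x : Fin n × Fin n → k)
    (M : Matrix (Fin n) (Fin n) (MvPolynomial (Fin n × Fin n) k))
    (f : MvPolynomial (Fin n × Fin n) k) :
    MvPolynomial.eval x (MvPolynomial.aeval (fun ij : Fin n × Fin n => M ij.1 ij.2) f) =
      MvPolynomial.eval (fun ij => (M.map (MvPolynomial.eval x)) ij.1 ij.2) f := by
  induction f using MvPolynomial.induction_on with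
  | C a => simp
  | add p q hp hq => simp only [map_add, hp, hq]
  | mul_X p i hp => simp only [map_mul, hp, aeval_X, eval_X, Matrix.map_apply]

theorem eval_conj {k : Type*} [Field k] {n : ℕ} (f : MvPolynomial (Fin n × Fin n) k)
    (hf : ∀ g : GL (Fin n) k, conjSubst k n g f = f) (g : GL (Fin n) k)
    (B : Matrix (Fin n) (Fin n) k) :
    MvPolynomial.eval (fun ij => B ij.1 ij.2) f =
      MvPolynomial.eval (fun ij => ((g : Matrix (Fin n) (Fin n) k) * B *
        ((g⁻¹ : GL (Fin n) k) : Matrix (Fin n) (Fin n) k)) ij.1 ij.2) f := by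
  conv_lhs => rw [← hf g]
  rw [conjSubst, eval_aeval_matrix]
  have hC : ∀ M : Matrix (Fin n) (Fin n) k,
      (M.map (MvPolynomial.C (σ := Fin n × Fin n))).map
        (MvPolynomial.eval fun ij : Fin n × Fin n => B ij.1 ij.2) = M := by
    intro M; ext i j; simp
  rw [Matrix.map_mul, Matrix.map_mul, genericMatrix_map_eval, hC, hC]
  rfl

/-- Every `GLₙ(k)`-invariant polynomial function on `Mₙ(k)` (under conjugation) is a
polynomial in the trace powers `Tr X, Tr (X²), …, Tr (Xⁿ)`. -/
theorem stmt_18 (k : Type*) [Field k] [CharZero k] (n : ℕ)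
    (f : MvPolynomial (Fin n × Fin n) k)
    (hf : ∀ g : GL (Fin n) k, conjSubst k n g f = f) :
    f ∈ Algebra.adjoin k
      {q : MvPolynomial (Fin n × Fin n) k |
        ∃ ℓ, 1 ≤ ℓ ∧ ℓ ≤ n ∧ q = ((genericMatrix k n) ^ ℓ).trace} := by
  classical
  set S := Algebra.adjoin k
      {q : MvPolynomial (Fin n × Fin n) k |
        ∃ ℓ, 1 ≤ ℓ ∧ ℓ ≤ n ∧ q = ((genericMatrix k n) ^ ℓ).trace} with hSdef
  have hc : ∀ i, (genericMatrix k n).charpoly.coeff i ∈ S :=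
    coeff_mem _ S fun l h1 h2 => Algebra.subset_adjoin ⟨l, h1, h2, rfl⟩
  have hmem : MvPolynomial.aeval
      (fun ij : Fin n × Fin n => compMat (genericMatrix k n) ij.1 ij.2) f ∈ S := by
    refine aeval_mem_of_mem S _ (fun s => ?_) f
    simp only [compMat, Matrix.of_apply]
    split_ifs
    · exact S.neg_mem (hc _)
    · exact S.one_mem
    · exact S.zero_mem
  have hp : (krylov (genericMatrix k n)).det ≠ 0 := by
    intro h
    have h2 := congrArg
      (MvPolynomial.eval fun ij : Fin n × Fin n => if (ij.1 : ℕ) = ij.2 + 1 then (1 : k) else 0) h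
    rw [RingHom.map_det, RingHom.mapMatrix_apply, krylov_map, genericMatrix_map_eval,
      krylov_shift, Matrix.det_one, map_zero] at h2
    exact one_ne_zero h2
  have hprod : (krylov (genericMatrix k n)).det * f = (krylov (genericMatrix k n)).det *
      MvPolynomial.aeval (fun ij : Fin n × Fin n => compMat (genericMatrix k n) ij.1 ij.2) f := by
    apply MvPolynomial.funext
    intro x
    rw [map_mul, map_mul, RingHom.map_det, RingHom.mapMatrix_apply, krylov_map,
      eval_aeval_matrix, compMat_map, genericMatrix_map_eval]
    set A : Matrix (Fin n) (Fin n) k := Matrix.of fun i j => x (i, j) with hA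
    by_cases hd : (krylov A).det = 0
    · rw [hd, zero_mul, zero_mul]
    · congr 1
      let g : GL (Fin n) k := Matrix.GeneralLinearGroup.mkOfDetNeZero (krylov A) hd
      have hg : (g : Matrix (Fin n) (Fin n) k) = krylov A := rfl
      rw [eval_conj f hf g (compMat A), hg, ← mul_krylov, mul_assoc, ← hg, ← Units.val_mul,
        mul_inv_cancel, Units.val_one, mul_one]
      rfl
  rw [mul_left_cancel₀ hp hprod]
  exact hmem
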